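/- arXiv:2405.08692 — 2 statements merged into one kernel-verified Lean document; each statement's English description precedes it below -/
import Mathlib

section
/- Let U ⊆ ℂ⁺ be a nonempty open, connected, simply connected subset of the open upper half-plane whose closure is homeomorphic to the closed unit disc, and set D = U ∪ conj(U). Fix q = a + ib ∈ U. Then there exists a continuous map H : D × [0,1] → D such that H(z,1) = z for all z ∈ D, H(z,0) = a + ib for z ∈ U and H(z,0) = a − ib for z ∈ conj(U), and for every t ∈ [0,1] the map z ↦ H(z,t) is holomorphic on D and satisfies H(conj z, t) = conj(H(z,t)). -/
open Set Metric

/-!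
A Riemann map `f : U → 𝔻` with `f q = 0` turns the radial contraction `w ↦ t w` of the disc into a
holomorphic contraction of `U` to `q`. Since `U` avoids the real axis, `U` and its mirror image are
disjoint open sets, so reflecting the contraction of `U` gives one of `D`, and that commutes with
conjugation.

The Riemann map is the univalent map of `U` into the disc with `f q = 0` that maximizes `‖f' q‖`:
a maximizer exists by Montel's theorem and is univalent by Hurwitz's theorem, and it is onto the
disc because otherwise a square root taken in the disc would yield a larger derivative.
-/

open Filter Topology ComplexConjugate

section Hurwitz

lemma le_norm_of_forall_mem_frontier_le_norm {E : Type*} [NormedAddCommGroup E] [NormedSpace ℂ E]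
    [Nontrivial E] {f : E → ℂ} {s : Set E} (hs : Bornology.IsBounded s) (hf : DiffContOnCl ℂ f s)
    (hf₀ : ∀ z ∈ closure s, f z ≠ 0) {m : ℝ} (hm : ∀ z ∈ frontier s, m ≤ ‖f z‖) {z : E}
    (hz : z ∈ closure s) : m ≤ ‖f z‖ := by
  obtain hm₀ | hm₀ := le_or_gt m 0
  · exact hm₀.trans (norm_nonneg _)
  have hbound : ‖f⁻¹ z‖ ≤ m⁻¹ :=
    Complex.norm_le_of_forall_mem_frontier_norm_le hs (hf.inv hf₀) (fun y hy ↦ by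
      rw [Pi.inv_apply, norm_inv]
      exact inv_anti₀ hm₀ (hm y hy)) hz
  rwa [Pi.inv_apply, norm_inv, inv_le_inv₀ (norm_pos_iff.mpr (hf₀ z hz)) hm₀] at hbound

lemma eventually_eq_zero_of_tendstoLocallyUniformlyOn {ι : Type*} {φ : Filter ι} [φ.NeBot]
    {U : Set ℂ} {F : ι → ℂ → ℂ} {f : ℂ → ℂ} (hU : IsOpen U)
    (hlim : TendstoLocallyUniformlyOn F f φ U) (hF : ∀ᶠ n in φ, DifferentiableOn ℂ (F n) U)
    (hF₀ : ∀ᶠ n in φ, ∀ z ∈ U, F n z ≠ 0) {z : ℂ} (hz : z ∈ U) (hfz : f z = 0) :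
    ∀ᶠ x in 𝓝 z, f x = 0 := by
  have hf : DifferentiableOn ℂ f U := hlim.differentiableOn hF hU
  refine (hf.analyticAt (hU.mem_nhds hz)).eventually_eq_zero_or_eventually_ne_zero.resolve_right
    fun hisolated ↦ ?_
  rw [eventually_nhdsWithin_iff] at hisolated
  obtain ⟨r, hr, hball⟩ := nhds_basis_closedBall.mem_iff.mp (hisolated.and (hU.mem_nhds hz))
  have hsub : closedBall z r ⊆ U := fun x hx ↦ (hball hx).2
  obtain ⟨x, hx, hmin⟩ := (isCompact_sphere z r).exists_isMinOn
    (NormedSpace.sphere_nonempty.mpr hr.le)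
    (hf.continuousOn.mono (sphere_subset_closedBall.trans hsub)).norm
  have hfx : 0 < ‖f x‖ / 2 := half_pos <| norm_pos_iff.mpr <|
    (hball (sphere_subset_closedBall hx)).1 (ne_of_mem_sphere hx hr.ne')
  have hunif := (tendstoLocallyUniformlyOn_iff_forall_isCompact hU).mp hlim _ hsub
    (isCompact_closedBall z r)
  obtain ⟨n, hn, hFn, hFn₀⟩ := ((tendstoUniformlyOn_iff.mp hunif _ hfx).and (hF.and hF₀)).exists
  have hlower : ‖f x‖ / 2 ≤ ‖F n z‖ := by
    rw [← closure_ball z hr.ne'] at hsub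
    refine le_norm_of_forall_mem_frontier_le_norm isBounded_ball (hFn.mono hsub).diffContOnCl
      (fun y hy ↦ hFn₀ y (hsub hy)) (fun y hy ↦ ?_) (subset_closure (mem_ball_self hr))
    rw [frontier_ball z hr.ne'] at hy
    have hxy : ‖f x‖ ≤ ‖f y‖ := hmin hy
    have hdist := hn y (sphere_subset_closedBall hy)
    rw [dist_eq_norm] at hdist
    linarith [norm_sub_norm_le (f y) (F n y)]
  have hupper := hn z (mem_closedBall_self hr.le)
  rw [hfz, dist_zero_left] at hupper
  exact hupper.not_ge hlower

end Hurwitz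

section Montel

variable {ι E F : Type*} [NormedAddCommGroup E] [NormedSpace ℂ E] [NormedAddCommGroup F]
  [NormedSpace ℂ F] {U : Set E} {R : ℝ} {f : ι → E → F}

lemma equicontinuousOn_of_forall_mapsTo_closedBall (hU : IsOpen U)
    (hf : ∀ n, DifferentiableOn ℂ (f n) U) (hmaps : ∀ n, MapsTo (f n) U (closedBall 0 R)) :
    EquicontinuousOn f U := by
  intro x hx
  obtain ⟨r, hr, hball⟩ := isOpen_iff.mp hU x hx
  refine EquicontinuousAt.equicontinuousWithinAt
    (equicontinuousAt_of_continuity_modulus (fun y ↦ 2 * R / r * dist y x) ?_ f ?_) U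
  · exact Continuous.tendsto' (by fun_prop) x 0 (by simp)
  · filter_upwards [ball_mem_nhds x hr] with y hy n
    rw [dist_comm]
    refine Complex.dist_le_div_mul_dist_of_mapsTo_ball ((hf n).mono hball) (fun v hv ↦ ?_) hy
    have hv := mem_closedBall.mp (hmaps n (hball hv))
    have hx := mem_closedBall.mp (hmaps n hx)
    rw [mem_closedBall]
    linarith [dist_triangle_right (f n v) (f n x) 0]

/-- Montel's theorem, with an ultrafilter in place of the usual passage to a subsequence. -/
lemma exists_tendstoLocallyUniformlyOn_of_forall_mapsTo_closedBall [LocallyCompactSpace E]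
    [ProperSpace F] (φ : Ultrafilter ι) (hU : IsOpen U) (hf : ∀ n, DifferentiableOn ℂ (f n) U)
    (hmaps : ∀ n, MapsTo (f n) U (closedBall 0 R)) :
    ∃ g, TendstoLocallyUniformlyOn f g φ U := by
  have hpointwise (z : E) : ∃ y, z ∈ U → Tendsto (f · z) φ (𝓝 y) := by
    by_cases hz : z ∈ U
    · obtain ⟨y, -, hle⟩ := (isCompact_closedBall (0 : F) R).ultrafilter_le_nhds (φ.map (f · z))
        (tendsto_principal.mpr (.of_forall fun n ↦ hmaps n hz))
      exact ⟨y, fun _ ↦ hle⟩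
    · exact ⟨0, fun h ↦ absurd h hz⟩
  choose g hg using hpointwise
  refine ⟨g, (tendstoLocallyUniformlyOn_iff_forall_isCompact hU).mpr fun K hKU hK ↦ ?_⟩
  have hcompact : ∀ L ∈ ({K} : Set (Set E)), IsCompact L := by rintro _ rfl; exact hK
  have hequi : ∀ L ∈ ({K} : Set (Set E)), EquicontinuousOn f L := by
    rintro _ rfl
    exact (equicontinuousOn_of_forall_mapsTo_closedBall hU hf hmaps).mono hKU
  refine UniformOnFun.tendsto_iff_tendstoUniformlyOn.mp
    ((EquicontinuousOn.tendsto_uniformOnFun_iff_pi' hcompact hequi φ g).mpr ?_) K rfl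
  rw [sUnion_singleton, tendsto_pi_nhds]
  exact fun z ↦ hg z (hKU z.2)

end Montel

lemma hasDerivAt_of_comp_eventuallyEq {𝕜 : Type*} [NontriviallyNormedField 𝕜] [CompleteSpace 𝕜]
    {p h k : 𝕜 → 𝕜} {p' k' z : 𝕜} (hp : HasStrictDerivAt p p' (h z)) (hp' : p' ≠ 0)
    (hh : ContinuousAt h z) (hk : HasDerivAt k k' z) (hphk : p ∘ h =ᶠ[𝓝 z] k) :
    HasDerivAt h (p'⁻¹ * k') z := by
  have hinv := (hp.to_localInverse hp').hasDerivAt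
  rw [show p (h z) = k z from hphk.self_of_nhds] at hinv
  refine (hinv.comp z hk).congr_of_eventuallyEq ?_
  filter_upwards [hh.eventually (hp.eventually_left_inverse hp'), hphk] with x hx hpx
  rw [Function.comp_apply, ← hpx, Function.comp_apply, hx]

/-- `f` is univalent (a conformal embedding) on `U`: injective with nonvanishing complex
derivative. Differentiability is implied, as `deriv f z = 0` wherever it fails. -/
structure IsUnivalentOn (f : ℂ → ℂ) (U : Set ℂ) : Prop where
  injOn : InjOn f U
  deriv_ne_zero : ∀ z ∈ U, deriv f z ≠ 0

namespace IsUnivalentOn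

variable {U V : Set ℂ} {f g : ℂ → ℂ} {z : ℂ}

lemma of_hasDerivAt {f' : ℂ → ℂ} (hinj : InjOn f U) (hf : ∀ z ∈ U, HasDerivAt f (f' z) z)
    (hf' : ∀ z ∈ U, f' z ≠ 0) : IsUnivalentOn f U :=
  ⟨hinj, fun z hz ↦ (hf z hz).deriv ▸ hf' z hz⟩

lemma hasDerivAt (hf : IsUnivalentOn f U) (hz : z ∈ U) : HasDerivAt f (deriv f z) z :=
  (differentiableAt_of_deriv_ne_zero (hf.deriv_ne_zero z hz)).hasDerivAt

lemma differentiableOn (hf : IsUnivalentOn f U) : DifferentiableOn ℂ f U :=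
  fun _ hz ↦ (hf.hasDerivAt hz).differentiableAt.differentiableWithinAt

lemma deriv_comp (hg : IsUnivalentOn g V) (hf : IsUnivalentOn f U) (hfUV : MapsTo f U V)
    (hz : z ∈ U) : deriv (g ∘ f) z = deriv g (f z) * deriv f z :=
  ((hg.hasDerivAt (hfUV hz)).comp z (hf.hasDerivAt hz)).deriv

lemma comp (hg : IsUnivalentOn g V) (hf : IsUnivalentOn f U) (hfUV : MapsTo f U V) :
    IsUnivalentOn (g ∘ f) U where
  injOn := hg.injOn.comp hf.injOn hfUV
  deriv_ne_zero z hz := by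
    rw [hg.deriv_comp hf hfUV hz]
    exact mul_ne_zero (hg.deriv_ne_zero _ (hfUV hz)) (hf.deriv_ne_zero z hz)

lemma image_mem_nhds (hf : IsUnivalentOn f U) (hU : IsOpen U) (hz : z ∈ U) {N : Set ℂ}
    (hN : N ∈ 𝓝 z) : f '' N ∈ 𝓝 (f z) := by
  have hstrict : HasStrictDerivAt f (deriv f z) z :=
    (hf.differentiableOn.analyticAt (hU.mem_nhds hz)).hasStrictDerivAt
  rw [← hstrict.map_nhds_eq (hf.deriv_ne_zero z hz)]
  exact image_mem_map hN

lemma isOpen_image (hf : IsUnivalentOn f U) (hU : IsOpen U) : IsOpen (f '' U) := by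
  rw [isOpen_iff_mem_nhds]
  rintro _ ⟨z, hz, rfl⟩
  exact hf.image_mem_nhds hU hz (hU.mem_nhds hz)

lemma continuousAt_invFunOn (hf : IsUnivalentOn f U) (hU : IsOpen U) (hz : z ∈ U) :
    ContinuousAt (Function.invFunOn f U) (f z) := by
  have hinv := hf.injOn.leftInvOn_invFunOn
  intro N hN
  rw [hinv hz] at hN
  rw [mem_map]
  filter_upwards [hf.image_mem_nhds hU hz (inter_mem hN (hU.mem_nhds hz))]
  rintro _ ⟨x, ⟨hxN, hxU⟩, rfl⟩
  rwa [mem_preimage, hinv hxU]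

lemma differentiableOn_invFunOn (hf : IsUnivalentOn f U) (hU : IsOpen U) :
    DifferentiableOn ℂ (Function.invFunOn f U) (f '' U) := by
  rintro _ ⟨z, hz, rfl⟩
  have hderiv := hf.hasDerivAt hz
  rw [← hf.injOn.leftInvOn_invFunOn hz] at hderiv
  refine (HasDerivAt.of_local_left_inverse (hf.continuousAt_invFunOn hU hz) hderiv ?_ ?_
    ).differentiableAt.differentiableWithinAt
  · rw [hf.injOn.leftInvOn_invFunOn hz]
    exact hf.deriv_ne_zero z hz
  · filter_upwards [hf.image_mem_nhds hU hz (hU.mem_nhds hz)] with y hy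
    exact Function.invFunOn_eq hy

lemma hasDerivAt_of_pow_eq {n : ℕ} (hn : n ≠ 0) (hf : IsUnivalentOn f U) (hU : IsOpen U)
    {h : ℂ → ℂ} (hh : ContinuousOn h U) (hpow : ∀ z ∈ U, h z ^ n = f z) (hz : z ∈ U)
    (hfz : f z ≠ 0) : HasDerivAt h ((n * h z ^ (n - 1))⁻¹ * deriv f z) z :=
  have hhz : h z ≠ 0 := ne_zero_pow hn (hpow z hz ▸ hfz)
  hasDerivAt_of_comp_eventuallyEq (hasStrictDerivAt_pow n (h z))
    (mul_ne_zero (Nat.cast_ne_zero.mpr hn) (pow_ne_zero _ hhz))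
    (hh.continuousAt (hU.mem_nhds hz)) (hf.hasDerivAt hz)
    (eventually_of_mem (hU.mem_nhds hz) hpow)

lemma of_pow_eq {n : ℕ} (hn : n ≠ 0) (hf : IsUnivalentOn f U) (hU : IsOpen U) {h : ℂ → ℂ}
    (hh : ContinuousOn h U) (hpow : ∀ z ∈ U, h z ^ n = f z) (hf₀ : ∀ z ∈ U, f z ≠ 0) :
    IsUnivalentOn h U := by
  have hh₀ : ∀ z ∈ U, h z ≠ 0 := fun z hz ↦ ne_zero_pow hn (hpow z hz ▸ hf₀ z hz)
  refine of_hasDerivAt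
    (fun x hx y hy hxy ↦ hf.injOn hx hy (by rw [← hpow x hx, ← hpow y hy, hxy]))
    (fun z hz ↦ hf.hasDerivAt_of_pow_eq hn hU hh hpow hz (hf₀ z hz)) fun z hz ↦ ?_
  exact mul_ne_zero
    (inv_ne_zero (mul_ne_zero (Nat.cast_ne_zero.mpr hn) (pow_ne_zero _ (hh₀ z hz))))
    (hf.deriv_ne_zero z hz)

section Limit

variable {ι : Type*} {φ : Filter ι} [φ.NeBot] {F : ι → ℂ → ℂ}

lemma deriv_ne_zero_of_tendstoLocallyUniformlyOn (hU : IsOpen U) (hUc : IsPreconnected U)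
    (hF : ∀ᶠ n in φ, IsUnivalentOn (F n) U) (hlim : TendstoLocallyUniformlyOn F f φ U)
    {q : ℂ} (hq : q ∈ U) (hfq : deriv f q ≠ 0) (hz : z ∈ U) : deriv f z ≠ 0 := by
  intro hfz
  have hFd := hF.mono fun _ h ↦ h.differentiableOn
  have hzero := eventually_eq_zero_of_tendstoLocallyUniformlyOn hU (hlim.deriv hFd hU)
    (hFd.mono fun _ h ↦ h.deriv hU) (hF.mono fun _ h ↦ h.deriv_ne_zero) hz hfz
  exact hfq <| (((hlim.differentiableOn hFd hU).deriv hU).analyticOnNhd hU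
    |>.eqOn_zero_of_preconnected_of_eventuallyEq_zero hUc hz hzero) hq

lemma injOn_of_tendstoLocallyUniformlyOn (hU : IsOpen U)
    (hF : ∀ᶠ n in φ, IsUnivalentOn (F n) U) (hlim : TendstoLocallyUniformlyOn F f φ U)
    (hf' : ∀ z ∈ U, deriv f z ≠ 0) : InjOn f U := by
  intro x hx y hy hxy
  by_contra hne
  have hlim' : TendstoLocallyUniformlyOn (fun n z ↦ F n z - F n x) (fun z ↦ f z - f x) φ
      (U \ {x}) :=
    (hlim.mono sdiff_subset).sub
      ((hlim.tendsto_at hx).tendstoUniformlyOn_const _).tendstoLocallyUniformlyOn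
  have hconst := eventually_eq_zero_of_tendstoLocallyUniformlyOn (hU.sdiff isClosed_singleton)
    hlim' (hF.mono fun _ h ↦ (h.differentiableOn.mono sdiff_subset).sub_const _)
    (hF.mono fun _ h z hz hFz ↦ hz.2 (h.injOn hz.1 hx (sub_eq_zero.mp hFz)))
    ⟨hy, Ne.symm hne⟩ (by rw [hxy, sub_self])
  have hconst : f =ᶠ[𝓝 y] fun _ ↦ f x := hconst.mono fun _ ↦ sub_eq_zero.mp
  exact hf' y hy (by rw [hconst.deriv_eq, deriv_const])

lemma of_tendstoLocallyUniformlyOn (hU : IsOpen U) (hUc : IsPreconnected U)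
    (hF : ∀ᶠ n in φ, IsUnivalentOn (F n) U) (hlim : TendstoLocallyUniformlyOn F f φ U)
    {q : ℂ} (hq : q ∈ U) (hfq : deriv f q ≠ 0) : IsUnivalentOn f U :=
  have hf' : ∀ z ∈ U, deriv f z ≠ 0 := fun _ ↦
    deriv_ne_zero_of_tendstoLocallyUniformlyOn hU hUc hF hlim hq hfq
  ⟨injOn_of_tendstoLocallyUniformlyOn hU hF hlim hf', hf'⟩

end Limit

end IsUnivalentOn

section DiscMoebius

/-- The Möbius automorphism of the unit disc that sends `w` to `0`, for `‖w‖ < 1`. -/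
noncomputable def discMoebius (w z : ℂ) : ℂ := (z - w) / (1 - conj w * z)

variable {w z : ℂ}

@[simp]
lemma discMoebius_self (w : ℂ) : discMoebius w w = 0 := by simp [discMoebius]

@[simp]
lemma discMoebius_zero (w : ℂ) : discMoebius w 0 = -w := by simp [discMoebius]

lemma sq_norm_one_sub_conj_mul_sub_sq_norm_sub (w z : ℂ) :
    ‖1 - conj w * z‖ ^ 2 - ‖z - w‖ ^ 2 = (1 - ‖w‖ ^ 2) * (1 - ‖z‖ ^ 2) := by
  simp only [Complex.sq_norm, Complex.normSq_apply, Complex.sub_re, Complex.sub_im,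
    Complex.mul_re, Complex.mul_im, Complex.conj_re, Complex.conj_im, Complex.one_re,
    Complex.one_im]
  ring

lemma one_sub_sq_norm_pos (hw : w ∈ ball (0 : ℂ) 1) : 0 < 1 - ‖w‖ ^ 2 :=
  sub_pos.mpr (pow_lt_one₀ (norm_nonneg w) (mem_ball_zero_iff.mp hw) two_ne_zero)

lemma norm_sub_lt_norm_one_sub_conj_mul (hw : w ∈ ball (0 : ℂ) 1) (hz : z ∈ ball (0 : ℂ) 1) :
    ‖z - w‖ < ‖1 - conj w * z‖ := by
  refine lt_of_pow_lt_pow_left₀ 2 (norm_nonneg _) (sub_pos.mp ?_)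
  rw [sq_norm_one_sub_conj_mul_sub_sq_norm_sub]
  exact mul_pos (one_sub_sq_norm_pos hw) (one_sub_sq_norm_pos hz)

lemma one_sub_conj_mul_ne_zero (hw : w ∈ ball (0 : ℂ) 1) (hz : z ∈ ball (0 : ℂ) 1) :
    1 - conj w * z ≠ 0 :=
  norm_pos_iff.mp ((norm_nonneg _).trans_lt (norm_sub_lt_norm_one_sub_conj_mul hw hz))

lemma mapsTo_discMoebius (hw : w ∈ ball (0 : ℂ) 1) :
    MapsTo (discMoebius w) (ball 0 1) (ball 0 1) := by
  intro z hz
  have hlt := norm_sub_lt_norm_one_sub_conj_mul hw hz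
  rwa [mem_ball_zero_iff, discMoebius, norm_div, div_lt_one ((norm_nonneg _).trans_lt hlt)]

lemma injOn_discMoebius (hw : w ∈ ball (0 : ℂ) 1) : InjOn (discMoebius w) (ball 0 1) := by
  intro x hx y hy hxy
  rw [discMoebius, discMoebius, div_eq_div_iff (one_sub_conj_mul_ne_zero hw hx)
    (one_sub_conj_mul_ne_zero hw hy)] at hxy
  have hmul : (x - y) * (1 - conj w * w) = 0 := by linear_combination hxy
  exact sub_eq_zero.mp ((mul_eq_zero.mp hmul).resolve_right (one_sub_conj_mul_ne_zero hw hw))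

lemma discMoebius_ne_zero (hw : w ∈ ball (0 : ℂ) 1) (hz : z ∈ ball (0 : ℂ) 1) (hzw : z ≠ w) :
    discMoebius w z ≠ 0 :=
  div_ne_zero (sub_ne_zero.mpr hzw) (one_sub_conj_mul_ne_zero hw hz)

lemma hasDerivAt_discMoebius (hz : 1 - conj w * z ≠ 0) :
    HasDerivAt (discMoebius w) ((1 - ‖w‖ ^ 2) / (1 - conj w * z) ^ 2) z := by
  have hdenom : HasDerivAt (fun z : ℂ ↦ 1 - conj w * z) (-(conj w * 1)) z :=
    ((hasDerivAt_id z).const_mul (conj w)).const_sub 1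
  refine (((hasDerivAt_id z).sub_const w).fun_div hdenom hz).congr_deriv ?_
  rw [← Complex.conj_mul', id]
  ring

lemma isUnivalentOn_discMoebius (hw : w ∈ ball (0 : ℂ) 1) :
    IsUnivalentOn (discMoebius w) (ball 0 1) :=
  .of_hasDerivAt (injOn_discMoebius hw)
    (fun _ hz ↦ hasDerivAt_discMoebius (one_sub_conj_mul_ne_zero hw hz)) fun z hz ↦
    div_ne_zero (by exact_mod_cast (one_sub_sq_norm_pos hw).ne')
      (pow_ne_zero _ (one_sub_conj_mul_ne_zero hw hz))

lemma norm_deriv_discMoebius_zero (hw : w ∈ ball (0 : ℂ) 1) :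
    ‖deriv (discMoebius w) 0‖ = 1 - ‖w‖ ^ 2 := by
  rw [(hasDerivAt_discMoebius (by simp)).deriv, mul_zero, sub_zero, one_pow, div_one]
  exact_mod_cast Real.norm_of_nonneg (one_sub_sq_norm_pos hw).le

lemma norm_deriv_discMoebius_self (hw : w ∈ ball (0 : ℂ) 1) :
    ‖deriv (discMoebius w) w‖ = (1 - ‖w‖ ^ 2)⁻¹ := by
  have hpos := one_sub_sq_norm_pos hw
  rw [(hasDerivAt_discMoebius (one_sub_conj_mul_ne_zero hw hw)).deriv, Complex.conj_mul',
    sq (1 - _), div_mul_cancel_left₀ (by exact_mod_cast hpos.ne'), norm_inv]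
  exact_mod_cast congrArg (·⁻¹) (Real.norm_of_nonneg hpos.le)

end DiscMoebius

section RiemannMapping

lemma isUnivalentOn_const_div_add {c : ℂ} (hc : c ≠ 0) (d : ℂ) :
    IsUnivalentOn (fun z ↦ c / (z + d)) {-d}ᶜ := by
  have hne : ∀ z ∈ ({-d}ᶜ : Set ℂ), z + d ≠ 0 := fun z hz h ↦ hz (eq_neg_of_add_eq_zero_left h)
  refine .of_hasDerivAt (fun x hx y hy hxy ↦ ?_)
    (fun z hz ↦ ((hasDerivAt_const z c).fun_div ((hasDerivAt_id z).add_const d) (hne z hz)))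
    fun z hz ↦ div_ne_zero (by simpa using hc) (pow_ne_zero 2 (hne z hz))
  rw [div_eq_div_iff (hne x hx) (hne y hy)] at hxy
  exact (add_right_cancel (mul_left_cancel₀ hc hxy)).symm

variable {U : Set ℂ} {q : ℂ}

/-- Koebe's square root trick: a branch `h` of `√(z - a)` omits a neighbourhood of `-h q`. -/
lemma exists_isUnivalentOn_mapsTo_ball (hU : IsOpen U) (hUc : IsSimplyConnected U)
    (hU' : U ≠ univ) : ∃ f, IsUnivalentOn f U ∧ MapsTo f U (ball 0 1) := by
  obtain ⟨a, ha⟩ := (ne_univ_iff_exists_notMem U).mp hU'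
  obtain ⟨q, hq⟩ := hUc.isPathConnected.nonempty
  have hsub : IsUnivalentOn (fun z ↦ z - a) U :=
    .of_hasDerivAt (sub_left_injective.injOn) (fun z _ ↦ (hasDerivAt_id z).sub_const a)
      fun _ _ ↦ one_ne_zero
  have hsub₀ : ∀ z ∈ U, z - a ≠ 0 := fun z hz h ↦ ha (sub_eq_zero.mp h ▸ hz)
  obtain ⟨h, hh, hsq⟩ := Complex.exists_continuousOn_pow_eq hUc hU
    hsub.differentiableOn.continuousOn (fun ⟨z, hz, h⟩ ↦ hsub₀ z hz h) two_ne_zero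
  have hh' : IsUnivalentOn h U := hsub.of_pow_eq two_ne_zero hU hh (fun z _ ↦ hsq z) hsub₀
  obtain ⟨r, hr, hball⟩ := isOpen_iff.mp (hh'.isOpen_image hU) (h q) (mem_image_of_mem h hq)
  have hfar : ∀ z ∈ U, r ≤ ‖h z + h q‖ := by
    intro z hz
    by_contra! hlt
    obtain ⟨x, -, hxz⟩ := hball (show -h z ∈ ball (h q) r by
      rwa [mem_ball, dist_comm, dist_eq_norm, sub_neg_eq_add, add_comm])
    have hxz' : x = z := sub_left_injective (b := a) (by simp only [← hsq, hxz, neg_sq])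
    subst hxz'
    exact hsub₀ x hz (by rw [← hsq, self_eq_neg.mp hxz, zero_pow two_ne_zero])
  refine ⟨_, (isUnivalentOn_const_div_add (c := r / 2) (by simpa using hr.ne') (h q)).comp hh'
    fun z hz hzq ↦ ?_, fun z hz ↦ ?_⟩
  · have hzq : h z = -h q := hzq
    exact hr.not_ge (by simpa [hzq] using hfar z hz)
  · rw [mem_ball_zero_iff, Function.comp_apply, norm_div,
      div_lt_one (hr.trans_le (hfar z hz)), norm_div, Complex.norm_real, Real.norm_of_nonneg hr.le,
      Complex.norm_ofNat]
    linarith [hfar z hz]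

/-- The competitors in the extremal problem of the Riemann mapping theorem: univalent maps of `U`
into the unit disc that vanish at `q`. -/
def normalizedDiscMaps (U : Set ℂ) (q : ℂ) : Set (ℂ → ℂ) :=
  {f | IsUnivalentOn f U ∧ MapsTo f U (ball 0 1) ∧ f q = 0}

lemma discMoebius_comp_mem_normalizedDiscMaps {f : ℂ → ℂ} (hf : IsUnivalentOn f U)
    (hmaps : MapsTo f U (ball 0 1)) (hq : q ∈ U) :
    discMoebius (f q) ∘ f ∈ normalizedDiscMaps U q :=
  ⟨(isUnivalentOn_discMoebius (hmaps hq)).comp hf hmaps,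
    (mapsTo_discMoebius (hmaps hq)).comp hmaps, discMoebius_self _⟩

lemma nonempty_normalizedDiscMaps (hU : IsOpen U) (hUc : IsSimplyConnected U) (hU' : U ≠ univ)
    (hq : q ∈ U) : (normalizedDiscMaps U q).Nonempty := by
  obtain ⟨f, hf, hmaps⟩ := exists_isUnivalentOn_mapsTo_ball hU hUc hU'
  exact ⟨_, discMoebius_comp_mem_normalizedDiscMaps hf hmaps hq⟩

lemma norm_deriv_lt_norm_deriv_discMoebius_comp_sqrt {f h : ℂ → ℂ} {w : ℂ} (hU : IsOpen U)
    (hq : q ∈ U) (hf : f ∈ normalizedDiscMaps U q) (hw : w ∈ ball (0 : ℂ) 1) (hw₀ : w ≠ 0)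
    (hh : IsUnivalentOn h U) (hmaps : MapsTo h U (ball 0 1))
    (hsq : ∀ z ∈ U, h z ^ 2 = discMoebius w (f z)) :
    ‖deriv f q‖ < ‖deriv (discMoebius (h q) ∘ h) q‖ := by
  obtain ⟨hf, hfmaps, hfq⟩ := hf
  have hk := (isUnivalentOn_discMoebius hw).comp hf hfmaps
  have hhq : ‖h q‖ ^ 2 = ‖w‖ := by rw [← norm_pow, hsq q hq, hfq, discMoebius_zero, norm_neg]
  have hhq₀ : 0 < ‖h q‖ := norm_pos_iff.mpr fun h₀ ↦ hw₀ (by simpa [h₀] using hhq.symm)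
  have hhq₁ : 0 < 1 - ‖h q‖ ^ 2 := one_sub_sq_norm_pos (hmaps hq)
  have hderiv : ‖deriv (discMoebius (h q) ∘ h) q‖ =
      (1 + ‖h q‖ ^ 2) / (2 * ‖h q‖) * ‖deriv f q‖ := by
    rw [(isUnivalentOn_discMoebius (hmaps hq)).deriv_comp hh hmaps hq, norm_mul,
      norm_deriv_discMoebius_self (hmaps hq), (hk.hasDerivAt_of_pow_eq two_ne_zero hU
        hh.differentiableOn.continuousOn hsq hq (by simpa [hfq] using hw₀)).deriv,
      (isUnivalentOn_discMoebius hw).deriv_comp hf hfmaps hq, hfq, norm_mul, norm_mul,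
      norm_deriv_discMoebius_zero hw, ← hhq]
    simp only [Nat.cast_ofNat, Nat.add_one_sub_one, pow_one, norm_inv, norm_mul,
      Complex.norm_ofNat]
    field_simp
    ring
  rw [hderiv]
  refine lt_mul_of_one_lt_left (norm_pos_iff.mpr (hf.deriv_ne_zero q hq)) ?_
  rw [one_lt_div (by positivity)]
  have hne : ‖h q‖ ≠ 1 := by rintro h; norm_num [h] at hhq₁
  nlinarith [sq_pos_of_ne_zero (sub_ne_zero.mpr hne)]

lemma exists_norm_deriv_lt_of_image_ne_ball {f : ℂ → ℂ} (hU : IsOpen U)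
    (hUc : IsSimplyConnected U) (hq : q ∈ U) (hf : f ∈ normalizedDiscMaps U q)
    (hne : f '' U ≠ ball 0 1) : ∃ g ∈ normalizedDiscMaps U q, ‖deriv f q‖ < ‖deriv g q‖ := by
  have ⟨hfu, hfmaps, hfq⟩ := hf
  obtain ⟨w, hw, hwf⟩ := exists_of_ssubset (hfmaps.image_subset.ssubset_of_ne hne)
  have hk : IsUnivalentOn (discMoebius w ∘ f) U :=
    (isUnivalentOn_discMoebius hw).comp hfu hfmaps
  have hk₀ : ∀ z ∈ U, (discMoebius w ∘ f) z ≠ 0 := fun z hz ↦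
    discMoebius_ne_zero hw (hfmaps hz) fun hzw ↦ hwf ⟨z, hz, hzw⟩
  obtain ⟨h, hh, hsq⟩ := Complex.exists_continuousOn_pow_eq hUc hU
    hk.differentiableOn.continuousOn (fun ⟨z, hz, h⟩ ↦ hk₀ z hz h) two_ne_zero
  have hhu : IsUnivalentOn h U := hk.of_pow_eq two_ne_zero hU hh (fun z _ ↦ hsq z) hk₀
  have hmaps : MapsTo h U (ball 0 1) := by
    intro z hz
    have hmem := mapsTo_discMoebius hw (hfmaps hz)
    rw [mem_ball_zero_iff] at hmem ⊢
    rwa [← pow_lt_one_iff_of_nonneg (norm_nonneg _) two_ne_zero, ← norm_pow, hsq]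
  exact ⟨_, discMoebius_comp_mem_normalizedDiscMaps hhu hmaps hq,
    norm_deriv_lt_norm_deriv_discMoebius_comp_sqrt hU hq hf hw
      (fun hw₀ ↦ hwf ⟨q, hq, hfq.trans hw₀.symm⟩) hhu hmaps fun z _ ↦ hsq z⟩

lemma bddAbove_norm_deriv_normalizedDiscMaps (hU : IsOpen U) (hq : q ∈ U) :
    BddAbove ((‖deriv · q‖) '' normalizedDiscMaps U q) := by
  obtain ⟨r, hr, hball⟩ := isOpen_iff.mp hU q hq
  refine ⟨1 / r, ?_⟩
  rintro _ ⟨f, ⟨hf, hmaps, hfq⟩, rfl⟩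
  refine Complex.norm_deriv_le_div_of_mapsTo_ball (hf.differentiableOn.mono hball)
    (fun z hz ↦ ?_) hr
  rw [hfq]
  exact ball_subset_closedBall (hmaps (hball hz))

lemma mem_normalizedDiscMaps_of_tendstoLocallyUniformlyOn {ι : Type*} {φ : Filter ι} [φ.NeBot]
    {F : ι → ℂ → ℂ} {f : ℂ → ℂ} (hU : IsOpen U) (hUc : IsPreconnected U) (hq : q ∈ U)
    (hF : ∀ n, F n ∈ normalizedDiscMaps U q) (hlim : TendstoLocallyUniformlyOn F f φ U)
    (hfq : deriv f q ≠ 0) : f ∈ normalizedDiscMaps U q := by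
  have hf : IsUnivalentOn f U :=
    .of_tendstoLocallyUniformlyOn hU hUc (.of_forall fun n ↦ (hF n).1) hlim hq hfq
  have hclosed : f '' U ⊆ closedBall 0 1 := by
    rintro _ ⟨z, hz, rfl⟩
    exact isClosed_closedBall.mem_of_tendsto (hlim.tendsto_at hz)
      (.of_forall fun n ↦ ball_subset_closedBall ((hF n).2.1 hz))
  have hopen : f '' U ⊆ ball 0 1 := by
    rw [← interior_closedBall _ one_ne_zero]
    exact interior_maximal hclosed (hf.isOpen_image hU)
  refine ⟨hf, mapsTo_iff_image_subset.mpr hopen, tendsto_nhds_unique (hlim.tendsto_at hq) ?_⟩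
  simp only [fun n ↦ (hF n).2.2, tendsto_const_nhds]

lemma exists_isMaxOn_norm_deriv_normalizedDiscMaps (hU : IsOpen U) (hUc : IsPreconnected U)
    (hq : q ∈ U) (hne : (normalizedDiscMaps U q).Nonempty) :
    ∃ f ∈ normalizedDiscMaps U q, IsMaxOn (‖deriv · q‖) (normalizedDiscMaps U q) f := by
  have hbdd := bddAbove_norm_deriv_normalizedDiscMaps hU hq
  obtain ⟨u, -, hu, hmem⟩ := exists_seq_tendsto_sSup (hne.image (‖deriv · q‖)) hbdd
  choose F hF hFu using hmem
  have hFd : ∀ n, DifferentiableOn ℂ (F n) U := fun n ↦ (hF n).1.differentiableOn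
  obtain ⟨f, hlim⟩ := exists_tendstoLocallyUniformlyOn_of_forall_mapsTo_closedBall
    (hyperfilter ℕ) hU hFd fun n ↦ (hF n).2.1.mono_right ball_subset_closedBall
  have hderiv : Tendsto (fun n ↦ ‖deriv (F n) q‖) (hyperfilter ℕ) (𝓝 ‖deriv f q‖) :=
    ((hlim.deriv (.of_forall hFd) hU).tendsto_at hq).norm
  simp only [hFu] at hderiv
  have hsup := tendsto_nhds_unique hderiv (hu.mono_left Nat.hyperfilter_le_atTop)
  have hmax : ∀ g ∈ normalizedDiscMaps U q, ‖deriv g q‖ ≤ ‖deriv f q‖ := fun g hg ↦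
    hsup ▸ le_csSup hbdd (mem_image_of_mem _ hg)
  obtain ⟨g, hg⟩ := hne
  have hfq : deriv f q ≠ 0 := norm_pos_iff.mp <|
    (norm_pos_iff.mpr (hg.1.deriv_ne_zero q hq)).trans_le (hmax g hg)
  exact ⟨f, mem_normalizedDiscMaps_of_tendstoLocallyUniformlyOn hU hUc hq hF hlim hfq, hmax⟩

theorem exists_isUnivalentOn_image_eq_ball (hU : IsOpen U) (hUc : IsSimplyConnected U)
    (hU' : U ≠ univ) (hq : q ∈ U) :
    ∃ f, IsUnivalentOn f U ∧ f '' U = ball 0 1 ∧ f q = 0 := by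
  obtain ⟨f, hf, hmax⟩ := exists_isMaxOn_norm_deriv_normalizedDiscMaps hU
    hUc.isPathConnected.isConnected.isPreconnected hq (nonempty_normalizedDiscMaps hU hUc hU' hq)
  refine ⟨f, hf.1, by_contra fun hne ↦ ?_, hf.2.2⟩
  obtain ⟨g, hg, hlt⟩ := exists_norm_deriv_lt_of_image_ne_ball hU hUc hq hf hne
  exact hlt.not_ge (hmax hg)

end RiemannMapping

lemma continuousOn_union_prod {X Y Z : Type*} [TopologicalSpace X] [TopologicalSpace Y]
    [TopologicalSpace Z] {f : X × Y → Z} {s t : Set X} {u : Set Y} (hs : IsOpen s) (ht : IsOpen t)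
    (hfs : ContinuousOn f (s ×ˢ u)) (hft : ContinuousOn f (t ×ˢ u)) :
    ContinuousOn f ((s ∪ t) ×ˢ u) := by
  have hnhds : ∀ v : Set X, IsOpen v → ∀ p : X × Y, p.1 ∈ v →
      v ×ˢ u ∈ 𝓝[(s ∪ t) ×ˢ u] p := fun v hv p hp ↦ by
    filter_upwards [self_mem_nhdsWithin,
      mem_nhdsWithin_of_mem_nhds ((hv.preimage continuous_fst).mem_nhds hp)] with x hx hxv
    exact ⟨hxv, hx.2⟩
  rintro p ⟨hps | hpt, hpu⟩
  · exact (hfs p ⟨hps, hpu⟩).mono_of_mem_nhdsWithin (hnhds s hs p hps)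
  · exact (hft p ⟨hpt, hpu⟩).mono_of_mem_nhdsWithin (hnhds t ht p hpt)

/-- A homotopy `H` within `D` from `r` (at time `0`) to the identity (at time `1`) through
holomorphic self-maps of `D`. Only the restriction of `H` to `D × [0, 1]` is relevant. -/
structure IsHolomorphicDeformation (H : ℂ → ℝ → ℂ) (D : Set ℂ) (r : ℂ → ℂ) : Prop where
  continuousOn : ContinuousOn (fun p : ℂ × ℝ ↦ H p.1 p.2) (D ×ˢ Icc (0 : ℝ) 1)
  mapsTo : ∀ t ∈ Icc (0 : ℝ) 1, MapsTo (fun z ↦ H z t) D D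
  apply_zero : ∀ z ∈ D, H z 0 = r z
  apply_one : ∀ z ∈ D, H z 1 = z
  differentiableOn : ∀ t ∈ Icc (0 : ℝ) 1, DifferentiableOn ℂ (fun z ↦ H z t) D

namespace IsHolomorphicDeformation

variable {H H' : ℂ → ℝ → ℂ} {D D' : Set ℂ} {r r' : ℂ → ℂ}

lemma congr (hH : IsHolomorphicDeformation H D r) (hHH' : ∀ z ∈ D, ∀ t, H' z t = H z t)
    (hrr' : EqOn r' r D) : IsHolomorphicDeformation H' D r' where
  continuousOn := hH.continuousOn.congr fun p hp ↦ hHH' p.1 hp.1 p.2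
  mapsTo t ht := (hH.mapsTo t ht).congr fun z hz ↦ (hHH' z hz t).symm
  apply_zero z hz := by rw [hHH' z hz, hH.apply_zero z hz, hrr' hz]
  apply_one z hz := by rw [hHH' z hz, hH.apply_one z hz]
  differentiableOn t ht := (hH.differentiableOn t ht).congr fun z hz ↦ hHH' z hz t

lemma conj_conj (hH : IsHolomorphicDeformation H D r) (hD : IsOpen D) :
    IsHolomorphicDeformation (fun z t ↦ conj (H (conj z) t)) (conj ⁻¹' D)
      fun z ↦ conj (r (conj z)) where
  continuousOn := Complex.continuous_conj.comp_continuousOn <|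
    hH.continuousOn.comp (f := fun p : ℂ × ℝ ↦ (conj p.1, p.2)) (by fun_prop)
      fun _ hp ↦ ⟨hp.1, hp.2⟩
  mapsTo t ht z hz := by simpa using hH.mapsTo t ht hz
  apply_zero z hz := by rw [hH.apply_zero _ hz]
  apply_one z hz := by rw [hH.apply_one _ hz, Complex.conj_conj]
  differentiableOn t ht z hz := by
    have hdiff := ((hH.differentiableOn t ht).differentiableAt (hD.mem_nhds hz)).conj_conj
    rw [Complex.conj_conj] at hdiff
    exact hdiff.differentiableWithinAt

lemma union (hH : IsHolomorphicDeformation H D r) (hH' : IsHolomorphicDeformation H D' r)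
    (hD : IsOpen D) (hD' : IsOpen D') : IsHolomorphicDeformation H (D ∪ D') r where
  continuousOn := continuousOn_union_prod hD hD' hH.continuousOn hH'.continuousOn
  mapsTo t ht := (hH.mapsTo t ht).union_union (hH'.mapsTo t ht)
  apply_zero z hz := hz.elim (hH.apply_zero z) (hH'.apply_zero z)
  apply_one z hz := hz.elim (hH.apply_one z) (hH'.apply_one z)
  differentiableOn t ht :=
    (hH.differentiableOn t ht).union_of_isOpen (hH'.differentiableOn t ht) hD hD'

end IsHolomorphicDeformation

lemma exists_isHolomorphicDeformation_const {U : Set ℂ} {q : ℂ} (hU : IsOpen U)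
    (hUc : IsSimplyConnected U) (hU' : U ≠ univ) (hq : q ∈ U) :
    ∃ H, IsHolomorphicDeformation H U fun _ ↦ q := by
  obtain ⟨f, hf, hfU, hfq⟩ := exists_isUnivalentOn_image_eq_ball hU hUc hU' hq
  have hg : DifferentiableOn ℂ (Function.invFunOn f U) (ball 0 1) :=
    hfU ▸ hf.differentiableOn_invFunOn hU
  have hgU : MapsTo (Function.invFunOn f U) (ball 0 1) U :=
    fun w hw ↦ Function.invFunOn_mem (show w ∈ f '' U from hfU ▸ hw)
  have hgf := hf.injOn.leftInvOn_invFunOn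
  have hshrink : ∀ z ∈ U, ∀ t ∈ Icc (0 : ℝ) 1, t • f z ∈ ball (0 : ℂ) 1 := fun z hz t ht ↦
    ((convex_ball 0 1).starConvex (mem_ball_self one_pos)).smul_mem
      (hfU ▸ mem_image_of_mem f hz) ht.1 ht.2
  refine ⟨fun z t ↦ Function.invFunOn f U (t • f z), ?_, fun t ht z hz ↦ hgU (hshrink z hz t ht),
    fun z _ ↦ ?_, fun z hz ↦ ?_, fun t ht ↦ ?_⟩
  · refine hg.continuousOn.comp (continuousOn_snd.smul ?_) fun p hp ↦ hshrink p.1 hp.1 p.2 hp.2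
    exact hf.differentiableOn.continuousOn.comp continuousOn_fst fun p hp ↦ hp.1
  · rw [zero_smul, ← hfq, hgf hq]
  · rw [one_smul, hgf hz]
  · exact hg.comp (hf.differentiableOn.const_smul t) fun z hz ↦ hshrink z hz t ht

/-- The extension of `f` from the upper to the lower half-plane by reflection, as in the Schwarz
reflection principle. The value on the real axis is irrelevant. -/
noncomputable def schwarzExtension (f : ℂ → ℂ) (z : ℂ) : ℂ :=
  if 0 < z.im then f z else conj (f (conj z))

section SchwarzExtension

variable (f : ℂ → ℂ) {z : ℂ}

lemma schwarzExtension_of_im_pos (hz : 0 < z.im) : schwarzExtension f z = f z :=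
  if_pos hz

lemma schwarzExtension_of_im_neg (hz : z.im < 0) :
    schwarzExtension f z = conj (f (conj z)) :=
  if_neg hz.not_gt

lemma schwarzExtension_conj (hz : z.im ≠ 0) :
    schwarzExtension f (conj z) = conj (schwarzExtension f z) := by
  obtain hneg | hpos := hz.lt_or_gt
  · rw [schwarzExtension_of_im_neg f hneg, Complex.conj_conj,
      schwarzExtension_of_im_pos f (by simpa using hneg)]
  · rw [schwarzExtension_of_im_pos f hpos,
      schwarzExtension_of_im_neg f (by simpa using hpos), Complex.conj_conj]

lemma IsHolomorphicDeformation.schwarzExtension {H : ℂ → ℝ → ℂ} {U : Set ℂ} {r : ℂ → ℂ}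
    (hH : IsHolomorphicDeformation H U r) (hU : IsOpen U) (hupper : ∀ z ∈ U, 0 < z.im) :
    IsHolomorphicDeformation (fun z t ↦ schwarzExtension (H · t) z) (U ∪ conj ⁻¹' U)
      (schwarzExtension r) := by
  have hlower : ∀ z ∈ conj ⁻¹' U, z.im < 0 := fun z hz ↦ by simpa using hupper _ hz
  refine union ?_ ?_ hU (hU.preimage Complex.continuous_conj)
  · exact hH.congr (fun z hz t ↦ schwarzExtension_of_im_pos _ (hupper z hz))
      fun z hz ↦ schwarzExtension_of_im_pos _ (hupper z hz)
  · exact (hH.conj_conj hU).congr (fun z hz t ↦ schwarzExtension_of_im_neg _ (hlower z hz))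
      fun z hz ↦ schwarzExtension_of_im_neg _ (hlower z hz)

end SchwarzExtension

theorem symmetric_holomorphic_retraction_product_general (U : Set ℂ) (hopen : IsOpen U)
    (hsc : IsSimplyConnected U) (hupper : ∀ z ∈ U, 0 < z.im)
    (D : Set ℂ) (hD : D = U ∪ (starRingEnd ℂ) '' U)
    (a b : ℝ) (hq : (a : ℂ) + b * Complex.I ∈ U) :
    ∃ H : ℂ → ℝ → ℂ,
      ContinuousOn (fun p : ℂ × ℝ => H p.1 p.2) (D ×ˢ Icc (0 : ℝ) 1) ∧
      (∀ z ∈ D, ∀ t ∈ Icc (0 : ℝ) 1, H z t ∈ D) ∧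
      (∀ z ∈ D, H z 1 = z) ∧
      (∀ z ∈ U, H z 0 = (a : ℂ) + b * Complex.I) ∧
      (∀ z ∈ (starRingEnd ℂ) '' U, H z 0 = (a : ℂ) - b * Complex.I) ∧
      (∀ t ∈ Icc (0 : ℝ) 1, DifferentiableOn ℂ (fun z => H z t) D) ∧
      (∀ t ∈ Icc (0 : ℝ) 1, ∀ z ∈ D, H ((starRingEnd ℂ) z) t = (starRingEnd ℂ) (H z t)) := by
  rw [image_eq_preimage_of_inverse Complex.conj_conj Complex.conj_conj] at hD ⊢
  subst hD
  have hlower : ∀ z ∈ conj ⁻¹' U, z.im < 0 := fun z hz ↦ by simpa using hupper _ hz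
  have hne : U ≠ univ := fun h ↦ (hupper 0 (h ▸ mem_univ 0)).false
  obtain ⟨K, hK⟩ := exists_isHolomorphicDeformation_const hopen hsc hne hq
  have hH := hK.schwarzExtension hopen hupper
  refine ⟨_, hH.continuousOn, fun z hz t ht ↦ hH.mapsTo t ht hz, hH.apply_one, fun z hz ↦ ?_,
    fun z hz ↦ ?_, hH.differentiableOn, fun t _ z hz ↦ schwarzExtension_conj _ ?_⟩
  · exact (hH.apply_zero z (.inl hz)).trans (schwarzExtension_of_im_pos _ (hupper z hz))
  · refine (hH.apply_zero z (.inr hz)).trans ?_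
    rw [schwarzExtension_of_im_neg _ (hlower z hz)]
    simp [sub_eq_add_neg]
  · exact hz.elim (fun hz ↦ (hupper z hz).ne') fun hz ↦ (hlower z hz).ne

/-- Let `U` be a nonempty open, connected, simply connected subset of the open upper
half-plane whose closure is a closed topological disc, and let `D = U ∪ conj(U)`.
For a fixed `q = a + ib ∈ U` there is a holomorphic, conjugation-equivariant strong
deformation retraction of `D` onto the pair of points `{a + ib, a - ib}`. -/
theorem symmetric_holomorphic_retraction_product (U : Set ℂ)
    (hne : U.Nonempty) (hopen : IsOpen U) (hconn : IsConnected U)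
    (hsc : SimplyConnectedSpace U)
    (hupper : ∀ z ∈ U, 0 < z.im)
    (hdisc : Nonempty (closure U ≃ₜ closedBall (0 : ℂ) 1))
    (D : Set ℂ) (hD : D = U ∪ (starRingEnd ℂ) '' U)
    (a b : ℝ) (hq : (a : ℂ) + b * Complex.I ∈ U) :
    ∃ H : ℂ → ℝ → ℂ,
      ContinuousOn (fun p : ℂ × ℝ => H p.1 p.2) (D ×ˢ Icc (0 : ℝ) 1) ∧
      (∀ z ∈ D, ∀ t ∈ Icc (0 : ℝ) 1, H z t ∈ D) ∧
      (∀ z ∈ D, H z 1 = z) ∧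
      (∀ z ∈ U, H z 0 = (a : ℂ) + b * Complex.I) ∧
      (∀ z ∈ (starRingEnd ℂ) '' U, H z 0 = (a : ℂ) - b * Complex.I) ∧
      (∀ t ∈ Icc (0 : ℝ) 1, DifferentiableOn ℂ (fun z => H z t) D) ∧
      (∀ t ∈ Icc (0 : ℝ) 1, ∀ z ∈ D, H ((starRingEnd ℂ) z) t = (starRingEnd ℂ) (H z t)) :=
  symmetric_holomorphic_retraction_product_general U hopen hsc hupper D hD a b hq
end

section
/- Let U ⊆ ℂ⁺ be a nonempty open, connected, simply connected subset of the open upper half-plane whose closure is homeomorphic to the closed unit disc, and set D = U ∪ conj(U). Then the set of all holomorphic, nowhere vanishing, Schwarz symmetric functions f : D → ℂ, equipped with the topology of uniform convergence on compact subsets of D, is path-connected. -/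
open Set Metric

/-- The set of continuous maps on `D` (with the compact-open topology, which on the
open set `D` is the topology of uniform convergence on compact subsets of `D`) that
are restrictions of holomorphic, nowhere vanishing, Schwarz symmetric functions. -/
def schwarzNonvanishing (D : Set ℂ) : Set C(D, ℂ) :=
  {F | ∃ f : ℂ → ℂ, DifferentiableOn ℂ f D ∧ (∀ z ∈ D, f z ≠ 0) ∧
    (∀ z ∈ D, f ((starRingEnd ℂ) z) = (starRingEnd ℂ) (f z)) ∧
    ∀ z : D, F z = f (z : ℂ)}

/-!
On a simply connected open set `U` disjoint from its conjugate, a nowhere vanishing holomorphic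
function has a holomorphic logarithm, and reflecting this logarithm across the real axis makes it
Schwarz symmetric on `U ∪ conj(U)` without destroying holomorphy, as the two pieces are disjoint
open sets. Hence `exp` maps the real vector space of Schwarz symmetric holomorphic functions onto
the nowhere vanishing ones, and the continuous image of a vector space is path-connected.
-/

open scoped ComplexConjugate

section

variable {D U : Set ℂ} {f g : ℂ → ℂ}

/-- `f` is Schwarz symmetric on `D`. The set `D` is not assumed to be closed under conjugation: for
`D` in the upper half-plane, the condition says that `f` on `conj(D)` is the reflection of `f` on
`D`. -/
def SchwarzSymmetricOn (f : ℂ → ℂ) (D : Set ℂ) : Prop :=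
  ∀ z ∈ D, f (conj z) = conj (f z)

namespace SchwarzSymmetricOn

theorem mono (hf : SchwarzSymmetricOn f D) (h : U ⊆ D) : SchwarzSymmetricOn f U :=
  fun z hz ↦ hf z (h hz)

theorem add (hf : SchwarzSymmetricOn f D) (hg : SchwarzSymmetricOn g D) :
    SchwarzSymmetricOn (f + g) D :=
  fun z hz ↦ by simp only [Pi.add_apply, hf z hz, hg z hz, map_add]

theorem const_smul (c : ℝ) (hf : SchwarzSymmetricOn f D) : SchwarzSymmetricOn (c • f) D :=
  fun z hz ↦ by
    simp only [Pi.smul_apply, hf z hz, Complex.real_smul, map_mul, Complex.conj_ofReal]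

theorem cexp (hf : SchwarzSymmetricOn f D) : SchwarzSymmetricOn (fun z ↦ Complex.exp (f z)) D :=
  fun z hz ↦ by simp only [hf z hz, Complex.exp_conj]

theorem union_image_conj (hf : SchwarzSymmetricOn f U) :
    SchwarzSymmetricOn f (U ∪ conj '' U) := by
  rintro _ (hz | ⟨z, hz, rfl⟩)
  · exact hf _ hz
  · rw [hf z hz, Complex.conj_conj, Complex.conj_conj]

theorem eqOn_union_image_conj (hf : SchwarzSymmetricOn f U) (hg : SchwarzSymmetricOn g U)
    (hfg : EqOn f g U) : EqOn f g (U ∪ conj '' U) := by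
  rintro _ (hz | ⟨z, hz, rfl⟩)
  · exact hfg hz
  · rw [hf z hz, hg z hz, hfg hz]

theorem differentiableOn_union_image_conj (hf : SchwarzSymmetricOn f U) (hU : IsOpen U)
    (hfU : DifferentiableOn ℂ f U) : DifferentiableOn ℂ f (U ∪ conj '' U) := by
  rintro _ (hz | ⟨z, hz, rfl⟩) <;> apply DifferentiableAt.differentiableWithinAt
  · exact hfU.differentiableAt (hU.mem_nhds hz)
  · have hconj : ∀ᶠ w in nhds (conj z), conj w ∈ U :=
      Complex.continuous_conj.continuousAt.eventually_mem
        (hU.mem_nhds (by rwa [Complex.conj_conj]))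
    refine (hfU.differentiableAt (hU.mem_nhds hz)).conj_conj.congr_of_eventuallyEq ?_
    filter_upwards [hconj] with w hw
    simpa only [Function.comp_apply, Complex.conj_conj] using hf _ hw

end SchwarzSymmetricOn

open scoped Classical in
/-- The Schwarz reflection of `g`: it is `g` on `U` and `z ↦ conj (g (conj z))` everywhere else. It
extends `g` from `U` to a Schwarz symmetric function on `U ∪ conj(U)` when the two sets are
disjoint. -/
noncomputable def schwarzReflection (U : Set ℂ) (g : ℂ → ℂ) : ℂ → ℂ :=
  U.piecewise g fun z ↦ conj (g (conj z))

theorem schwarzReflection_eqOn (U : Set ℂ) (g : ℂ → ℂ) : EqOn (schwarzReflection U g) g U :=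
  fun _ hz ↦ if_pos hz

theorem schwarzSymmetricOn_schwarzReflection (hU : Disjoint U (conj '' U)) (g : ℂ → ℂ) :
    SchwarzSymmetricOn (schwarzReflection U g) U := by
  intro z hz
  have hz_conj : conj z ∉ U := hU.notMem_of_mem_right (mem_image_of_mem _ hz)
  calc schwarzReflection U g (conj z) = conj (g (conj (conj z))) := if_neg hz_conj
    _ = conj (schwarzReflection U g z) := by
      rw [Complex.conj_conj, schwarzReflection_eqOn U g hz]

theorem differentiableOn_of_cexp (hU : IsOpen U) (hg : ContinuousOn g U)
    (hexp : DifferentiableOn ℂ (fun z ↦ Complex.exp (g z)) U) : DifferentiableOn ℂ g U := by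
  intro z hz
  have hz_nhds : U ∈ nhds z := hU.mem_nhds hz
  exact (HasDerivAt.of_comp_left (hg.continuousAt hz_nhds) (Complex.hasDerivAt_exp (g z))
    (hexp.differentiableAt hz_nhds).hasDerivAt (Complex.exp_ne_zero _)
    .rfl).differentiableAt.differentiableWithinAt

theorem exists_differentiableOn_eqOn_cexp (hU : IsSimplyConnected U) (hopen : IsOpen U)
    (hf : DifferentiableOn ℂ f U) (hf₀ : ∀ z ∈ U, f z ≠ 0) :
    ∃ g : ℂ → ℂ, DifferentiableOn ℂ g U ∧ EqOn (fun z ↦ Complex.exp (g z)) f U := by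
  have hf₀' : 0 ∉ f '' U := fun ⟨z, hz, hfz⟩ ↦ hf₀ z hz hfz
  obtain ⟨g, hg, hgf⟩ :=
    Complex.exists_continuousOn_eqOn_exp_comp hU hopen hf.continuousOn hf₀'
  exact ⟨g, differentiableOn_of_cexp hopen hg (hf.congr hgf), hgf⟩

theorem exists_schwarzSymmetricOn_eqOn_cexp (hU : IsSimplyConnected U) (hopen : IsOpen U)
    (hdisj : Disjoint U (conj '' U)) (hf : DifferentiableOn ℂ f U) (hf₀ : ∀ z ∈ U, f z ≠ 0)
    (hsymm : SchwarzSymmetricOn f U) :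
    ∃ g : ℂ → ℂ, DifferentiableOn ℂ g (U ∪ conj '' U) ∧ SchwarzSymmetricOn g (U ∪ conj '' U) ∧
      EqOn (fun z ↦ Complex.exp (g z)) f (U ∪ conj '' U) := by
  obtain ⟨g, hg, hgf⟩ := exists_differentiableOn_eqOn_cexp hU hopen hf hf₀
  have hext : EqOn (schwarzReflection U g) g U := schwarzReflection_eqOn U g
  have hext_symm : SchwarzSymmetricOn (schwarzReflection U g) U :=
    schwarzSymmetricOn_schwarzReflection hdisj g
  have hexp : EqOn (fun z ↦ Complex.exp (schwarzReflection U g z)) f U :=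
    fun z hz ↦ (congrArg Complex.exp (hext hz)).trans (hgf hz)
  exact ⟨schwarzReflection U g,
    hext_symm.differentiableOn_union_image_conj hopen (hg.congr hext),
    hext_symm.union_image_conj, hext_symm.cexp.eqOn_union_image_conj hsymm hexp⟩

/-- The real vector space of Schwarz symmetric holomorphic functions on `D`. As in
`schwarzNonvanishing`, its elements are continuous maps on `D` that are restrictions of such
functions, so that it carries the compact-open topology. -/
def schwarzHolomorphic (D : Set ℂ) : Submodule ℝ C(D, ℂ) where
  carrier := {G | ∃ g : ℂ → ℂ, DifferentiableOn ℂ g D ∧ SchwarzSymmetricOn g D ∧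
    ∀ z : D, G z = g z}
  zero_mem' := ⟨0, differentiableOn_const 0, fun _ _ ↦ (map_zero _).symm, fun _ ↦ rfl⟩
  add_mem' := by
    rintro _ _ ⟨g₁, hg₁, hsymm₁, hG₁⟩ ⟨g₂, hg₂, hsymm₂, hG₂⟩
    exact ⟨g₁ + g₂, hg₁.add hg₂, hsymm₁.add hsymm₂,
      fun z ↦ congrArg₂ (· + ·) (hG₁ z) (hG₂ z)⟩
  smul_mem' := by
    rintro c _ ⟨g, hg, hsymm, hG⟩
    exact ⟨c • g, hg.const_smul c, hsymm.const_smul c, fun z ↦ congrArg (c • ·) (hG z)⟩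

/-- The complex exponential bundled as a continuous map, for composing with elements of
`C(D, ℂ)`. -/
noncomputable def cexpContinuousMap : C(ℂ, ℂ) :=
  ⟨Complex.exp, Complex.continuous_exp⟩

theorem cexp_comp_mem_schwarzNonvanishing {G : C(D, ℂ)} (hG : G ∈ schwarzHolomorphic D) :
    cexpContinuousMap.comp G ∈ schwarzNonvanishing D := by
  obtain ⟨g, hg, hsymm, hGg⟩ := hG
  exact ⟨fun z ↦ Complex.exp (g z), hg.cexp, fun _ _ ↦ Complex.exp_ne_zero _, hsymm.cexp,
    fun z ↦ congrArg Complex.exp (hGg z)⟩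

theorem exists_cexp_comp_eq_of_mem_schwarzNonvanishing (hU : IsSimplyConnected U)
    (hopen : IsOpen U) (hdisj : Disjoint U (conj '' U)) {F : C(↥(U ∪ conj '' U), ℂ)}
    (hF : F ∈ schwarzNonvanishing (U ∪ conj '' U)) :
    ∃ G ∈ schwarzHolomorphic (U ∪ conj '' U), cexpContinuousMap.comp G = F := by
  obtain ⟨f, hf, hf₀, hsymm, hFf⟩ := hF
  have hUD : U ⊆ U ∪ conj '' U := subset_union_left
  obtain ⟨g, hg, hg_symm, hgf⟩ :=
    exists_schwarzSymmetricOn_eqOn_cexp hU hopen hdisj (hf.mono hUD) (fun z hz ↦ hf₀ z (hUD hz))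
      (SchwarzSymmetricOn.mono hsymm hUD)
  refine ⟨⟨_, hg.continuousOn.domRestrict⟩, ⟨g, hg, hg_symm, fun _ ↦ rfl⟩, ?_⟩
  ext z
  exact (hgf z.2).trans (hFf z).symm

theorem image_cexp_schwarzHolomorphic (hU : IsSimplyConnected U) (hopen : IsOpen U)
    (hdisj : Disjoint U (conj '' U)) :
    cexpContinuousMap.comp '' (schwarzHolomorphic (U ∪ conj '' U) : Set C(↥(U ∪ conj '' U), ℂ)) =
      schwarzNonvanishing (U ∪ conj '' U) :=
  Subset.antisymm (image_subset_iff.2 fun _ ↦ cexp_comp_mem_schwarzNonvanishing) fun _ ↦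
    exists_cexp_comp_eq_of_mem_schwarzNonvanishing hU hopen hdisj

theorem disjoint_image_conj_of_im_pos (hU : ∀ z ∈ U, 0 < z.im) : Disjoint U (conj '' U) := by
  rw [disjoint_left]
  rintro _ hz ⟨w, hw, rfl⟩
  have him : 0 < -w.im := by simpa only [Complex.conj_im] using hU _ hz
  linarith [hU w hw]

theorem schwarzNonvanishing_pathConnected_product_general (hU : IsSimplyConnected U)
    (hopen : IsOpen U) (hdisj : Disjoint U (conj '' U)) :
    IsPathConnected (schwarzNonvanishing (U ∪ conj '' U)) := by
  rw [← image_cexp_schwarzHolomorphic hU hopen hdisj]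
  have hvec : IsPathConnected
      (schwarzHolomorphic (U ∪ conj '' U) : Set C(↥(U ∪ conj '' U), ℂ)) :=
    (schwarzHolomorphic _).convex.isPathConnected (schwarzHolomorphic _).nonempty
  exact hvec.image (ContinuousMap.continuous_postcomp _)

end

/-- For a basic product-type symmetric domain `D = U ∪ conj(U)` (`U` a nonempty open,
connected, simply connected subset of the upper half-plane with closed-disc closure),
the set of holomorphic, nowhere vanishing, Schwarz symmetric functions on `D`, with
the topology of uniform convergence on compact subsets of `D`, is path-connected. -/
theorem schwarzNonvanishing_pathConnected_product (U : Set ℂ)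
    (hne : U.Nonempty) (hopen : IsOpen U) (hconn : IsConnected U)
    (hsc : SimplyConnectedSpace U)
    (hupper : ∀ z ∈ U, 0 < z.im)
    (hdisc : Nonempty (closure U ≃ₜ closedBall (0 : ℂ) 1))
    (D : Set ℂ) (hD : D = U ∪ (starRingEnd ℂ) '' U) :
    IsPathConnected (schwarzNonvanishing D) := by
  subst hD
  exact schwarzNonvanishing_pathConnected_product_general hsc hopen
    (disjoint_image_conj_of_im_pos hupper)
end
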